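/- Global boundary Lipschitz bound in the unit ball. For every integer n ≥ 2, reals 0 < λ ≤ Λ, exponents q > n and p with n ≤ p ≤ q, d₀ ∈ (0,1/4], and K > 0, there exists a constant C > 0 such that the following holds. Let b, f : B₁ → ℝ be continuous with b ≥ 0 and ‖b‖_{L^q(B₁)} ≤ K, and let u be continuous on the closed ball cl(B₁) and C² on B₁, with L⁺[u] ≥ −f in B₁ and u ≤ 0 on ∂B₁. Then u(x) ≤ C·( ‖f⁺‖_{L^p(B₁)} + ‖f⁺‖_{L^q({x ∈ B₁ : 1−|x| < d₀})} )·(1−|x|) for all x ∈ B₁. -/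

import Mathlib

open MeasureTheory
open scoped ENNReal

/-- The Pucci minimal extremal operator `𝓜⁻(M)` with ellipticity constants `lam ≤ Lam`:
the infimum of `tr(A*M)` over symmetric matrices `A` with `lam•I ≤ A ≤ Lam•I`. -/
noncomputable def pucciMinus (n : ℕ) (lam Lam : ℝ) (M : Matrix (Fin n) (Fin n) ℝ) : ℝ :=
  sInf { t : ℝ | ∃ A : Matrix (Fin n) (Fin n) ℝ, A.IsSymm ∧
    (A - lam • (1 : Matrix (Fin n) (Fin n) ℝ)).PosSemidef ∧
    (Lam • (1 : Matrix (Fin n) (Fin n) ℝ) - A).PosSemidef ∧ t = (A * M).trace }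

/-- The Pucci maximal extremal operator `𝓜⁺(M)`. -/
noncomputable def pucciPlus (n : ℕ) (lam Lam : ℝ) (M : Matrix (Fin n) (Fin n) ℝ) : ℝ :=
  sSup { t : ℝ | ∃ A : Matrix (Fin n) (Fin n) ℝ, A.IsSymm ∧
    (A - lam • (1 : Matrix (Fin n) (Fin n) ℝ)).PosSemidef ∧
    (Lam • (1 : Matrix (Fin n) (Fin n) ℝ) - A).PosSemidef ∧ t = (A * M).trace }

/-- The Hessian matrix `D²u(x)` of `u` at `x`. -/
noncomputable def hess (n : ℕ) (u : EuclideanSpace ℝ (Fin n) → ℝ)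
    (x : EuclideanSpace ℝ (Fin n)) : Matrix (Fin n) (Fin n) ℝ :=
  fun i j => fderiv ℝ (fun y => fderiv ℝ u y (EuclideanSpace.single j (1 : ℝ))) x
    (EuclideanSpace.single i (1 : ℝ))

/-- The euclidean norm `|Du(x)|` of the gradient of `u` at `x`. -/
noncomputable def gradNorm (n : ℕ) (u : EuclideanSpace ℝ (Fin n) → ℝ)
    (x : EuclideanSpace ℝ (Fin n)) : ℝ := ‖fderiv ℝ u x‖

/-- The `L^p` norm `(∫_E |g|^p)^(1/p)`, as a Lebesgue integral valued in `[0,∞]`. -/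
noncomputable def LpNormE (n : ℕ) (p : ℝ) (g : EuclideanSpace ℝ (Fin n) → ℝ)
    (E : Set (EuclideanSpace ℝ (Fin n))) : ℝ≥0∞ :=
  (∫⁻ x in E, ENNReal.ofReal (|g x| ^ p)) ^ (1 / p)

/-- The last (`n`-th) coordinate `x_n` of a point of `ℝⁿ`. -/
def lastC (n : ℕ) (hn : 1 ≤ n) (x : EuclideanSpace ℝ (Fin n)) : ℝ := x ⟨n - 1, by omega⟩

/-- The open half-ball `B_R⁺ = {|x| < R, x_n > 0}`. -/
def halfBall (n : ℕ) (hn : 1 ≤ n) (R : ℝ) : Set (EuclideanSpace ℝ (Fin n)) :=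
  {x | ‖x‖ < R ∧ 0 < lastC n hn x}

/-- The flat boundary part `B_R⁰ = {|x| ≤ R, x_n = 0}`. -/
def flatB (n : ℕ) (hn : 1 ≤ n) (R : ℝ) : Set (EuclideanSpace ℝ (Fin n)) :=
  {x | ‖x‖ ≤ R ∧ lastC n hn x = 0}

/-- The norm `‖g‖_{L^{p,q}(B_R⁺)} = ‖g‖_{L^p(B_R⁺)} + ‖g‖_{L^q(B_R⁺ ∩ {x_n < d0})}`. -/
noncomputable def LpqNormHB (n : ℕ) (hn : 1 ≤ n) (p q d0 R : ℝ)
    (g : EuclideanSpace ℝ (Fin n) → ℝ) : ℝ≥0∞ :=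
  LpNormE n p g (halfBall n hn R) +
    LpNormE n q g {x ∈ halfBall n hn R | lastC n hn x < d0}

/-- The open cube `Q_ρ` of side `ρ` centered at `(0,…,0,ρ/2)`. -/
def cubeQ (n : ℕ) (hn : 1 ≤ n) (ρ : ℝ) : Set (EuclideanSpace ℝ (Fin n)) :=
  {x | (∀ i : Fin n, i.1 ≠ n - 1 → |x i| < ρ / 2) ∧ 0 < lastC n hn x ∧ lastC n hn x < ρ}

/-- The norm `‖g‖_{L^{p,q}(Q₂)} = ‖g‖_{L^p(Q₂)} + ‖g‖_{L^q(Q₂ ∩ {x_n < d0})}`. -/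
noncomputable def LpqNormQ (n : ℕ) (hn : 1 ≤ n) (p q d0 : ℝ)
    (g : EuclideanSpace ℝ (Fin n) → ℝ) : ℝ≥0∞ :=
  LpNormE n p g (cubeQ n hn 2) +
    LpNormE n q g {x ∈ cubeQ n hn 2 | lastC n hn x < d0}

/-!
Let `Ω` be convex and let `z ∈ ∂Ω` be a boundary point closest to `x`. With the supporting
hyperplane at `z` of outer normal `ν`, write `l y = ⟪ν, z - y⟫ ≥ 0` for the height over it. On the
dyadic balls `B(z, r_k)`, `r_k = 2⁻ᵏ d₀`, one proves bounds `u ≤ a_k l + m_k r_k`. If such a bound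
holds on `B(z, r)`, then the quadratic barrier
`w = (m / r) |y - z|² + a l + B (m / r) l (r - l)` is a supersolution of `𝓜⁺` lying above `u` on
`∂(Ω ∩ B(z, r))`, so `u - w` is controlled by the Aleksandrov–Bakelman–Pucci estimate, with right
hand side `f + b |Dw|`. As `b` and `f` lie in `L^q` with `q > n`, Hölder's inequality gives this
error the size `r · r^α (|Dw| + ‖f⁺‖)`, `α = 1 - n / q > 0`. Restricting to `B(z, r / 2)`, the
quantity `a + 4 B m + ‖f⁺‖` grows by a factor at most `1 + E r^α`; since `∑ r_k^α` converges, the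
slopes stay bounded and `u x ≤ C |x - z|`.

The ABP estimate with a drift is proved by covering the gradients: every small slope is the
gradient of `u` at a point where the Hessian is nonpositive, and the volume of this set of slopes
is bounded by `∫ |det D²u|`, split over dyadic shells of `|Du|` so that `|Du|` in the drift term
can be treated as constant.
-/

local notation "𝔼" k:arg => EuclideanSpace ℝ (Fin k)

section Matrix

variable {ι : Type*}

lemma isClosed_setOf_posSemidef [Finite ι] : IsClosed {M : Matrix ι ι ℝ | M.PosSemidef} := by
  have := Fintype.ofFinite ι
  simp only [Matrix.posSemidef_iff_dotProduct_mulVec, Matrix.IsHermitian, Set.ofPred_and,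
    Set.ofPred_forall]
  exact (isClosed_eq (by fun_prop) continuous_id).inter
    (isClosed_iInter fun _ => isClosed_le continuous_const (by fun_prop))

variable [Fintype ι]

open scoped MatrixOrder in
lemma trace_mul_nonneg_of_posSemidef {M N : Matrix ι ι ℝ} (hM : M.PosSemidef)
    (hN : N.PosSemidef) : 0 ≤ (M * N).trace := by
  classical
  obtain ⟨C, rfl⟩ := CStarAlgebra.nonneg_iff_eq_star_mul_self.mp hM.nonneg
  rw [Matrix.star_eq_conjTranspose, Matrix.mul_assoc, Matrix.trace_mul_comm]
  exact (hN.mul_mul_conjTranspose_same C).trace_nonneg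

lemma det_le_trace_pow_of_posSemidef [DecidableEq ι] {N : Matrix ι ι ℝ} (hN : N.PosSemidef) :
    N.det ≤ N.trace ^ Fintype.card ι := by
  have hdet : N.det = ∏ i, hN.1.eigenvalues i := by simpa using hN.1.det_eq_prod_eigenvalues
  have htrace : N.trace = ∑ i, hN.1.eigenvalues i := by
    simpa using hN.1.trace_eq_sum_eigenvalues
  rw [hdet, htrace, ← Finset.card_univ, ← Finset.prod_const]
  exact Finset.prod_le_prod (fun i _ => hN.eigenvalues_nonneg i) fun i hi =>
    Finset.single_le_sum (fun j _ => hN.eigenvalues_nonneg j) hi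

end Matrix

section Pucci

variable {n : ℕ} {lam Lam : ℝ}

/-- The symmetric matrices with `lam • I ≤ A ≤ Lam • I`, over which the Pucci operators range. -/
def ellipticMatrices (n : ℕ) (lam Lam : ℝ) : Set (Matrix (Fin n) (Fin n) ℝ) :=
  {A | A.IsSymm ∧ (A - lam • (1 : Matrix (Fin n) (Fin n) ℝ)).PosSemidef ∧
    (Lam • (1 : Matrix (Fin n) (Fin n) ℝ) - A).PosSemidef}

lemma smul_one_mem_ellipticMatrices (h : lam ≤ Lam) :
    lam • (1 : Matrix (Fin n) (Fin n) ℝ) ∈ ellipticMatrices n lam Lam := by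
  refine ⟨by simp [Matrix.IsSymm], by simpa using Matrix.PosSemidef.zero, ?_⟩
  rw [← sub_smul]
  exact Matrix.PosSemidef.one.smul (sub_nonneg.2 h)

lemma mul_trace_le_trace_mul {A N : Matrix (Fin n) (Fin n) ℝ} (hA : A ∈ ellipticMatrices n lam Lam)
    (hN : N.PosSemidef) : lam * N.trace ≤ (A * N).trace := by
  have h := trace_mul_nonneg_of_posSemidef hA.2.1 hN
  rwa [Matrix.sub_mul, Matrix.trace_sub, Matrix.smul_mul, Matrix.one_mul, Matrix.trace_smul,
    smul_eq_mul, sub_nonneg] at h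

lemma trace_le_of_mem_ellipticMatrices {A : Matrix (Fin n) (Fin n) ℝ}
    (hA : A ∈ ellipticMatrices n lam Lam) : A.trace ≤ n * Lam := by
  have h := hA.2.2.trace_nonneg
  rw [Matrix.trace_sub, Matrix.trace_smul, Matrix.trace_one, Fintype.card_fin, smul_eq_mul] at h
  linarith

lemma pucciPlus_sub_le (hLam : lam ≤ Lam) {W N : Matrix (Fin n) (Fin n) ℝ} {t : ℝ}
    (hW : ∀ A ∈ ellipticMatrices n lam Lam, (A * W).trace ≤ t) (hN : N.PosSemidef) :
    pucciPlus n lam Lam (W - N) ≤ t - lam * N.trace := by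
  refine csSup_le
    (let ⟨h1, h2, h3⟩ := smul_one_mem_ellipticMatrices hLam; ⟨_, _, h1, h2, h3, rfl⟩) ?_
  rintro _ ⟨A, h1, h2, h3, rfl⟩
  have hA : A ∈ ellipticMatrices n lam Lam := ⟨h1, h2, h3⟩
  rw [Matrix.mul_sub, Matrix.trace_sub]
  linarith [hW A hA, mul_trace_le_trace_mul hA hN]

lemma trace_mul_one_sub_smul_vecMulVec_nonpos {A : Matrix (Fin n) (Fin n) ℝ}
    (hA : A ∈ ellipticMatrices n lam Lam) {B : ℝ} (hB : 0 ≤ B) (hBlam : n * Lam ≤ B * lam)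
    {ν : EuclideanSpace ℝ (Fin n)} (hν : ‖ν‖ = 1) :
    (A * (1 - B • Matrix.vecMulVec ν.ofLp ν.ofLp)).trace ≤ 0 := by
  have hpsd : (Matrix.vecMulVec ν.ofLp ν.ofLp).PosSemidef := by
    simpa using Matrix.posSemidef_vecMulVec_self_star ν.ofLp
  have htrace : (Matrix.vecMulVec ν.ofLp ν.ofLp).trace = 1 := by
    rw [Matrix.trace_vecMulVec, dotProduct, ← one_pow 2, ← hν, EuclideanSpace.real_norm_sq_eq]
    simp only [sq]
  have hlow := mul_trace_le_trace_mul hA hpsd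
  rw [htrace, mul_one] at hlow
  rw [Matrix.mul_sub, Matrix.mul_one, Matrix.mul_smul, Matrix.trace_sub, Matrix.trace_smul,
    smul_eq_mul]
  linarith [trace_le_of_mem_ellipticMatrices hA, mul_le_mul_of_nonneg_left hlow hB]

end Pucci

section Calculus

open Filter Topology

lemma deriv_deriv_nonpos_of_isLocalMax {φ : ℝ → ℝ} {t : ℝ} (hc : ContinuousAt φ t)
    (hmax : IsLocalMax φ t) : deriv (deriv φ) t ≤ 0 := by
  by_contra! h
  have hmin : IsLocalMin φ t := isLocalMin_of_deriv_deriv_pos h hmax.deriv_eq_zero hc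
  have hconst : φ =ᶠ[𝓝 t] fun _ => φ t := by
    filter_upwards [hmax, hmin] with s h₁ h₂ using le_antisymm h₁ h₂
  have hzero := hconst.deriv.deriv_eq
  simp only [deriv_const', deriv_const] at hzero
  exact h.ne' hzero

section NormedSpace

variable {E : Type*} [NormedAddCommGroup E] [NormedSpace ℝ E] {f : E → ℝ} {x : E}

lemma differentiableAt_fderiv_of_contDiffAt_two (hf : ContDiffAt ℝ 2 f x) :
    DifferentiableAt ℝ (fderiv ℝ f) x :=
  (hf.fderiv_right (m := 1) (by norm_num)).differentiableAt (by norm_num)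

lemma deriv_deriv_comp_add_smul (hf : ContDiffAt ℝ 2 f x) (h : E) :
    deriv (deriv fun t : ℝ => f (x + t • h)) 0 = fderiv ℝ (fderiv ℝ f) x h h := by
  have hline (t : ℝ) : HasDerivAt (fun t : ℝ => x + t • h) h t := by
    simpa using ((hasDerivAt_id t).smul_const h).const_add x
  have htendsto : Tendsto (fun t : ℝ => x + t • h) (𝓝 0) (𝓝 x) := by
    simpa using (hline 0).continuousAt.tendsto
  have hderiv : deriv (fun t : ℝ => f (x + t • h)) =ᶠ[𝓝 0] fun t => fderiv ℝ f (x + t • h) h := by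
    filter_upwards [htendsto.eventually (hf.eventually (by norm_num))] with t ht
    exact ((ht.differentiableAt (by norm_num)).hasFDerivAt.comp_hasDerivAt t (hline t)).deriv
  have hsnd : HasFDerivAt (fderiv ℝ f) (fderiv ℝ (fderiv ℝ f) x) (x + (0 : ℝ) • h) := by
    simpa using (differentiableAt_fderiv_of_contDiffAt_two hf).hasFDerivAt
  have hcomp : HasDerivAt (fun t : ℝ => fderiv ℝ f (x + t • h)) (fderiv ℝ (fderiv ℝ f) x h) 0 :=
    hsnd.comp_hasDerivAt 0 (hline 0)
  rw [hderiv.deriv_eq, (hcomp.clm_apply (hasDerivAt_const 0 h)).deriv]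
  simp

lemma fderiv_fderiv_apply_self_nonpos_of_isLocalMax (hf : ContDiffAt ℝ 2 f x)
    (hmax : IsLocalMax f x) (h : E) : fderiv ℝ (fderiv ℝ f) x h h ≤ 0 := by
  have hline : ContinuousAt (fun t : ℝ => x + t • h) 0 := by fun_prop
  have hx : x + (0 : ℝ) • h = x := by simp
  rw [← deriv_deriv_comp_add_smul hf]
  refine deriv_deriv_nonpos_of_isLocalMax ?_ ?_
  · exact ContinuousAt.comp (g := f) (by rw [hx]; exact hf.continuousAt) hline
  · have hev := hline.tendsto.eventually (by rw [hx]; exact hmax)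
    simpa [IsLocalMax, IsMaxFilter] using hev

end NormedSpace

section Hessian

variable {n : ℕ} {u w : 𝔼 n → ℝ} {x : 𝔼 n}

lemma norm_gradient_eq_gradNorm (u : 𝔼 n → ℝ) (x : 𝔼 n) : ‖gradient u x‖ = gradNorm n u x :=
  LinearIsometryEquiv.norm_map _ _

lemma gradient_apply_eq (u : 𝔼 n → ℝ) (x : 𝔼 n) (j : Fin n) :
    gradient u x j = fderiv ℝ u x (EuclideanSpace.single j 1) := by
  rw [← inner_gradient_left, EuclideanSpace.inner_single_right]
  simp

lemma measurable_gradient (u : 𝔼 n → ℝ) : Measurable (gradient u) :=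
  (LinearIsometryEquiv.continuous _).measurable.comp (measurable_fderiv ℝ u)

lemma hess_apply (hu : ContDiffAt ℝ 2 u x) (i j : Fin n) :
    hess n u x i j =
      fderiv ℝ (fderiv ℝ u) x (EuclideanSpace.single i 1) (EuclideanSpace.single j 1) := by
  unfold hess
  rw [fderiv_clm_apply (differentiableAt_fderiv_of_contDiffAt_two hu) (differentiableAt_const _)]
  simp

lemma isHermitian_hess (hu : ContDiffAt ℝ 2 u x) : (hess n u x).IsHermitian := by
  ext i j
  rw [Matrix.conjTranspose_apply, star_trivial, hess_apply hu, hess_apply hu]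
  exact hu.isSymmSndFDerivAt (by simp) _ _

lemma dotProduct_hess_mulVec (hu : ContDiffAt ℝ 2 u x) (h : 𝔼 n) :
    h.ofLp ⬝ᵥ (hess n u x).mulVec h.ofLp = fderiv ℝ (fderiv ℝ u) x h h := by
  have hsum : h = ∑ i, h i • EuclideanSpace.single i (1 : ℝ) := by
    simpa using ((EuclideanSpace.basisFun (Fin n) ℝ).sum_repr h).symm
  conv_rhs => rw [hsum]
  simp only [map_sum, map_smul, _root_.sum_apply, _root_.smul_apply, dotProduct, Matrix.mulVec,
    hess_apply hu, smul_eq_mul, Finset.mul_sum]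
  rw [Finset.sum_comm]
  exact Finset.sum_congr rfl fun i _ => Finset.sum_congr rfl fun j _ => by ring

lemma posSemidef_neg_hess_of_isLocalMax (hu : ContDiffAt ℝ 2 u x) (hmax : IsLocalMax u x) :
    (-hess n u x).PosSemidef := by
  refine Matrix.posSemidef_iff_dotProduct_mulVec.2 ⟨(isHermitian_hess hu).neg, fun h => ?_⟩
  have hquad := dotProduct_hess_mulVec hu (WithLp.toLp 2 h)
  have hnonpos := fderiv_fderiv_apply_self_nonpos_of_isLocalMax hu hmax (WithLp.toLp 2 h)
  rw [star_trivial, Matrix.neg_mulVec, dotProduct_neg]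
  linarith

lemma hess_sub (hu : ContDiffAt ℝ 2 u x) (hw : ContDiffAt ℝ 2 w x) :
    hess n (u - w) x = hess n u x - hess n w x := by
  have hfderiv : fderiv ℝ (u - w) =ᶠ[𝓝 x] fderiv ℝ u - fderiv ℝ w := by
    filter_upwards [hu.eventually (by norm_num), hw.eventually (by norm_num)] with y h₁ h₂
    exact fderiv_sub (h₁.differentiableAt (by norm_num)) (h₂.differentiableAt (by norm_num))
  ext i j
  rw [Matrix.sub_apply, hess_apply (u := u - w) (hu.sub hw), hess_apply hu, hess_apply hw,
    hfderiv.fderiv_eq, fderiv_sub (differentiableAt_fderiv_of_contDiffAt_two hu)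
      (differentiableAt_fderiv_of_contDiffAt_two hw)]
  rfl

lemma hess_continuousLinearMap (L : 𝔼 n →L[ℝ] ℝ) (x : 𝔼 n) : hess n L x = 0 := by
  ext i j
  simp [hess]

lemma differentiableAt_gradient (hu : ContDiffAt ℝ 2 u x) : DifferentiableAt ℝ (gradient u) x := by
  refine differentiableAt_euclidean.2 fun j => ?_
  simp only [gradient_apply_eq]
  exact (differentiableAt_fderiv_of_contDiffAt_two hu).clm_apply (differentiableAt_const _)

lemma det_fderiv_gradient (hu : ContDiffAt ℝ 2 u x) :
    (fderiv ℝ (gradient u) x).det = (hess n u x).det := by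
  rw [← Matrix.det_transpose, ContinuousLinearMap.det,
    ← LinearMap.det_toMatrix (EuclideanSpace.basisFun (Fin n) ℝ).toBasis]
  congr 1
  ext j i
  have hproj := ((EuclideanSpace.proj j : 𝔼 n →L[ℝ] ℝ).hasFDerivAt.comp x
    (differentiableAt_gradient hu).hasFDerivAt).fderiv
  have hcoord : (EuclideanSpace.proj j : 𝔼 n →L[ℝ] ℝ) ∘ gradient u =
      fun y => fderiv ℝ u y (EuclideanSpace.single j 1) := funext fun y => gradient_apply_eq u y j
  rw [hcoord] at hproj
  simp [LinearMap.toMatrix_apply, hess, hproj]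

end Hessian

end Calculus

section AleksandrovBakelmanPucci

open Metric Set

lemma ofReal_pow_mul_addHaar_ball_le_addHaar_annulus {E : Type*} [NormedAddCommGroup E]
    [NormedSpace ℝ E] [FiniteDimensional ℝ E] [Nontrivial E] [MeasurableSpace E] [BorelSpace E]
    (μ : Measure E) [μ.IsAddHaarMeasure] {s : ℝ} (hs : 0 < s) :
    ENNReal.ofReal (s ^ Module.finrank ℝ E) * μ (ball 0 1) ≤ μ (ball 0 (2 * s) \ ball 0 s) := by
  refine le_trans ?_ le_measure_sdiff
  rw [Measure.addHaar_ball_of_pos μ _ (by positivity : 0 < 2 * s),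
    Measure.addHaar_ball_of_pos μ _ hs, ← ENNReal.sub_mul fun _ _ => measure_ball_lt_top.ne,
    ← ENNReal.ofReal_sub _ (by positivity)]
  gcongr
  have htwo : (2 : ℝ) ≤ 2 ^ Module.finrank ℝ E :=
    le_self_pow₀ one_le_two Module.finrank_pos.ne'
  rw [mul_pow]
  nlinarith [pow_pos hs (Module.finrank ℝ E)]

variable {n : ℕ} {D : Set (𝔼 n)} {v : 𝔼 n → ℝ}

/-- The points of `D` where the Hessian of `v` is negative semidefinite. It contains the upper
contact set of the Aleksandrov–Bakelman–Pucci method and is more convenient for measurability. -/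
def concaveHessianSet (v : 𝔼 n → ℝ) (D : Set (𝔼 n)) : Set (𝔼 n) :=
  {x ∈ D | (-hess n v x).PosSemidef}

lemma measurableSet_concaveHessianSet (v : 𝔼 n → ℝ) (hD : MeasurableSet D) :
    MeasurableSet (concaveHessianSet v D) := by
  let hessEntries (x : 𝔼 n) (i j : Fin n) : ℝ := hess n v x i j
  have hmeas : Measurable hessEntries := measurable_pi_lambda _ fun i =>
    measurable_pi_lambda _ fun j => measurable_fderiv_apply_const ℝ _ _
  have hclosed : IsClosed {M : Fin n → Fin n → ℝ | (-Matrix.of M).PosSemidef} :=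
    isClosed_setOf_posSemidef.preimage (f := fun M : Fin n → Fin n → ℝ => -Matrix.of M)
      (continuous_neg (G := Matrix (Fin n) (Fin n) ℝ))
  exact hD.inter (hmeas hclosed.measurableSet)

lemma ball_subset_gradient_image_concaveHessianSet (hD : IsOpen D)
    (hv : ContDiffOn ℝ 2 v D) (hvc : ContinuousOn v (closure D)) (hfr : ∀ y ∈ frontier D, v y ≤ 0)
    {x₀ : 𝔼 n} (hx₀ : x₀ ∈ D) {d s : ℝ} (hd : 0 < d) (hDd : D ⊆ closedBall x₀ d)
    (hs : s * d ≤ v x₀) : ball 0 s ⊆ gradient v '' concaveHessianSet v D := by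
  intro p hp
  let L : 𝔼 n →L[ℝ] ℝ := innerSL ℝ p
  have hclosure : closure D ⊆ closedBall x₀ d := closure_minimal hDd isClosed_closedBall
  obtain ⟨y, hy, hmax⟩ := ((isCompact_closedBall x₀ d).of_isClosed_subset isClosed_closure
    hclosure).exists_isMaxOn ⟨x₀, subset_closure hx₀⟩ (hvc.sub L.continuous.continuousOn)
  have hle : v x₀ - L x₀ ≤ v y - L y := hmax (subset_closure hx₀)
  have hslope : L x₀ - L y < s * d := by
    calc L x₀ - L y = inner ℝ p (x₀ - y) := (inner_sub_right p x₀ y).symm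
      _ ≤ ‖p‖ * ‖x₀ - y‖ := real_inner_le_norm _ _
      _ ≤ ‖p‖ * d := by gcongr; exact dist_eq_norm x₀ y ▸ mem_closedBall'.1 (hclosure hy)
      _ < s * d := by gcongr; exact mem_ball_zero_iff.1 hp
  have hyD : y ∈ D := by
    by_contra hyD
    linarith [hfr y (hD.frontier_eq ▸ ⟨hy, hyD⟩)]
  have hlocal : IsLocalMax (v - ⇑L) y :=
    (hmax.on_subset subset_closure).isLocalMax (hD.mem_nhds hyD)
  have hvy : ContDiffAt ℝ 2 v y := hv.contDiffAt (hD.mem_nhds hyD)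
  have hvdiff : DifferentiableAt ℝ v y := hvy.differentiableAt (by norm_num)
  refine ⟨y, ⟨hyD, ?_⟩, ext_inner_right ℝ fun h => ?_⟩
  · have hhess := posSemidef_neg_hess_of_isLocalMax (u := v - ⇑L)
      (hvy.sub L.contDiff.contDiffAt) hlocal
    rwa [hess_sub hvy L.contDiff.contDiffAt, hess_continuousLinearMap, sub_zero] at hhess
  · have hzero := hlocal.fderiv_eq_zero
    rw [fderiv_sub hvdiff L.differentiableAt, L.fderiv, sub_eq_zero] at hzero
    rw [inner_gradient_left, hzero, innerSL_apply_apply]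

lemma volume_gradient_image_le (hD : IsOpen D) (hv : ContDiffOn ℝ 2 v D) {S : Set (𝔼 n)}
    (hS : MeasurableSet S) (hSD : S ⊆ concaveHessianSet v D) {h : 𝔼 n → ℝ}
    (htrace : ∀ x ∈ S, (-hess n v x).trace ≤ h x) :
    volume (gradient v '' S) ≤ ∫⁻ x in S, ‖h x‖ₑ ^ n := by
  have hvS (x) (hx : x ∈ S) : ContDiffAt ℝ 2 v x := hv.contDiffAt (hD.mem_nhds (hSD hx).1)
  refine (addHaar_image_le_lintegral_abs_det_fderiv volume hS
    fun x hx => (differentiableAt_gradient (hvS x hx)).hasFDerivAt.hasFDerivWithinAt).trans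
    (setLIntegral_mono' hS fun x hx => ?_)
  have hneg : (-hess n v x).PosSemidef := (hSD hx).2
  rw [Real.enorm_of_nonneg (hneg.trace_nonneg.trans (htrace x hx)),
    ← ENNReal.ofReal_pow (hneg.trace_nonneg.trans (htrace x hx))]
  refine ENNReal.ofReal_le_ofReal ?_
  calc |(fderiv ℝ (gradient v) x).det| = |(-hess n v x).det| := by
        rw [det_fderiv_gradient (hvS x hx), Matrix.det_neg, abs_mul, abs_pow, abs_neg, abs_one,
          one_pow, one_mul]
    _ = (-hess n v x).det := abs_of_nonneg hneg.det_nonneg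
    _ ≤ (-hess n v x).trace ^ n := by simpa using det_le_trace_pow_of_posSemidef hneg
    _ ≤ h x ^ n := pow_le_pow_left₀ hneg.trace_nonneg (htrace x hx) n

variable [NeZero n]

lemma volume_ball_one_le_lintegral_shell (hD : IsOpen D) (hv : ContDiffOn ℝ 2 v D) {h : 𝔼 n → ℝ}
    {s : ℝ} (hs : 0 < s) (hh : ∀ x ∈ D, 0 ≤ h x)
    (htrace : ∀ x ∈ concaveHessianSet v D, s ≤ gradNorm n v x →
      (-hess n v x).trace ≤ h x * gradNorm n v x)
    (hcov : ball 0 (2 * s) ⊆ gradient v '' concaveHessianSet v D) :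
    volume (ball (0 : 𝔼 n) 1) ≤
      ∫⁻ x in concaveHessianSet v D ∩ gradient v ⁻¹' (ball 0 (2 * s) \ ball 0 s),
        ‖2 * h x‖ₑ ^ n := by
  set S := concaveHessianSet v D ∩ gradient v ⁻¹' (ball 0 (2 * s) \ ball 0 s)
  have hS : MeasurableSet S := (measurableSet_concaveHessianSet v hD.measurableSet).inter
    (measurable_gradient v (measurableSet_ball.diff measurableSet_ball))
  have htraceS : ∀ x ∈ S, (-hess n v x).trace ≤ s * (2 * h x) := by
    rintro x ⟨hx, hlt, hge⟩
    rw [mem_ball_zero_iff, norm_gradient_eq_gradNorm] at hlt hge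
    nlinarith [htrace x hx (not_lt.1 hge), hh x hx.1]
  have himage : ball 0 (2 * s) \ ball 0 s ⊆ gradient v '' S := by
    rw [image_inter_preimage]
    exact subset_inter (sdiff_subset.trans hcov) Subset.rfl
  have hscaled : ENNReal.ofReal (s ^ n) * volume (ball (0 : 𝔼 n) 1) ≤
      ENNReal.ofReal (s ^ n) * ∫⁻ x in S, ‖2 * h x‖ₑ ^ n := by
    calc ENNReal.ofReal (s ^ n) * volume (ball (0 : 𝔼 n) 1)
        ≤ volume (ball (0 : 𝔼 n) (2 * s) \ ball 0 s) := by
          simpa using ofReal_pow_mul_addHaar_ball_le_addHaar_annulus (volume : Measure (𝔼 n)) hs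
      _ ≤ volume (gradient v '' S) := measure_mono himage
      _ ≤ ∫⁻ x in S, ‖s * (2 * h x)‖ₑ ^ n :=
          volume_gradient_image_le hD hv hS inter_subset_left htraceS
      _ = ENNReal.ofReal (s ^ n) * ∫⁻ x in S, ‖2 * h x‖ₑ ^ n := by
          simp_rw [enorm_mul s, mul_pow]
          rw [lintegral_const_mul' _ _ (by finiteness), Real.enorm_of_nonneg hs.le,
            ENNReal.ofReal_pow hs.le]
  exact (ENNReal.mul_le_mul_iff_right (by simp [hs]) ENNReal.ofReal_ne_top).1 hscaled

lemma natCast_mul_volume_ball_one_le_lintegral (hD : IsOpen D) (hv : ContDiffOn ℝ 2 v D)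
    {h : 𝔼 n → ℝ} {μ : ℝ} (hμ : 0 < μ) (hh : ∀ x ∈ D, 0 ≤ h x)
    (htrace : ∀ x ∈ concaveHessianSet v D, μ ≤ gradNorm n v x →
      (-hess n v x).trace ≤ h x * gradNorm n v x)
    {N : ℕ} (hcov : ball 0 (2 ^ N * μ) ⊆ gradient v '' concaveHessianSet v D) :
    N * volume (ball (0 : 𝔼 n) 1) ≤
      ∫⁻ x in concaveHessianSet v D ∩ gradient v ⁻¹' ball 0 (2 ^ N * μ), ‖2 * h x‖ₑ ^ n := by
  induction N with
  | zero => simp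
  | succ N ih =>
    set Γ := concaveHessianSet v D
    have hdouble : 2 ^ (N + 1) * μ = 2 * (2 ^ N * μ) := by ring
    have hμN : μ ≤ 2 ^ N * μ := le_mul_of_one_le_left hμ.le (one_le_pow₀ one_le_two)
    have hballs : ball (0 : 𝔼 n) (2 ^ N * μ) ⊆ ball 0 (2 ^ (N + 1) * μ) :=
      ball_subset_ball (by linarith)
    have hshell := volume_ball_one_le_lintegral_shell hD hv (hμ.trans_le hμN) hh
      (fun x hx hle => htrace x hx (hμN.trans hle)) (hdouble ▸ hcov)
    have hsplit := lintegral_inter_add_sdiff (μ := volume) (fun x => ‖2 * h x‖ₑ ^ n)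
      (Γ ∩ gradient v ⁻¹' ball 0 (2 ^ (N + 1) * μ))
      (measurable_gradient v (measurableSet_ball (x := 0) (ε := 2 ^ N * μ)))
    rw [inter_assoc, ← preimage_inter, inter_eq_right.2 hballs, inter_sdiff_assoc,
      ← preimage_sdiff, hdouble] at hsplit
    rw [hdouble, ← hsplit, Nat.cast_succ, add_mul, one_mul]
    exact add_le_add (ih (hballs.trans hcov)) hshell

/-- The constant of the Aleksandrov–Bakelman–Pucci estimate when the coefficient `h` in
`-tr D²v ≤ h |Dv|` has `L^n` norm at most `H`: the number of dyadic shells that fit into the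
gradient image is at most `(2 H)^n / |B₁|`. -/
noncomputable def abpConst (n : ℕ) (H : ℝ) : ℝ :=
  2 ^ (⌊(2 * H) ^ n / (volume (ball (0 : 𝔼 n) 1)).toReal⌋₊ + 1)

lemma abpConst_pos (n : ℕ) (H : ℝ) : 0 < abpConst n H := by
  unfold abpConst
  positivity

theorem le_abpConst_mul (hD : IsOpen D) (hv : ContDiffOn ℝ 2 v D)
    (hvc : ContinuousOn v (closure D)) (hfr : ∀ y ∈ frontier D, v y ≤ 0)
    {h : 𝔼 n → ℝ} (hh : ∀ x ∈ D, 0 ≤ h x) {μ : ℝ} (hμ : 0 < μ)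
    (htrace : ∀ x ∈ concaveHessianSet v D, μ ≤ gradNorm n v x →
      (-hess n v x).trace ≤ h x * gradNorm n v x)
    {H : ℝ} (hH : 0 ≤ H) (hnorm : eLpNorm' h n (volume.restrict D) ≤ ENNReal.ofReal H)
    {d : ℝ} (hd : 0 < d) {x : 𝔼 n} (hx : x ∈ D) (hDd : D ⊆ closedBall x d) :
    v x ≤ abpConst n H * μ * d := by
  by_contra! hlt
  set ω := (volume (ball (0 : 𝔼 n) 1)).toReal
  have hω : 0 < ω :=
    ENNReal.toReal_pos (measure_ball_pos volume _ one_pos).ne' measure_ball_lt_top.ne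
  set N := ⌊(2 * H) ^ n / ω⌋₊ + 1
  have hshells := natCast_mul_volume_ball_one_le_lintegral (N := N) hD hv hμ hh htrace
    (ball_subset_gradient_image_concaveHessianSet hD hv hvc hfr hx hd hDd hlt.le)
  have hn : (0 : ℝ) < n := Nat.cast_pos'.2 (NeZero.pos n)
  have hintegral : ∫⁻ x in D, ‖2 * h x‖ₑ ^ n ≤ ENNReal.ofReal ((2 * H) ^ n) := by
    calc ∫⁻ x in D, ‖2 * h x‖ₑ ^ n
        = ENNReal.ofReal 2 ^ n * eLpNorm' h n (volume.restrict D) ^ n := by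
          have hpow := lintegral_rpow_enorm_eq_rpow_eLpNorm' (f := h) (μ := volume.restrict D) hn
          simp_rw [ENNReal.rpow_natCast] at hpow
          simp_rw [enorm_mul, mul_pow]
          rw [lintegral_const_mul' _ _ (by finiteness), Real.enorm_of_nonneg zero_le_two, hpow]
      _ ≤ ENNReal.ofReal 2 ^ n * ENNReal.ofReal H ^ n := by gcongr
      _ = ENNReal.ofReal ((2 * H) ^ n) := by
          rw [← mul_pow, ← ENNReal.ofReal_mul zero_le_two, ENNReal.ofReal_pow (by positivity)]
  have hcount : (N : ℝ) * ω ≤ (2 * H) ^ n := by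
    have hle := hshells.trans ((lintegral_mono_set fun y hy => hy.1.1).trans hintegral)
    have hreal := ENNReal.toReal_mono ENNReal.ofReal_ne_top hle
    rwa [ENNReal.toReal_mul, ENNReal.toReal_natCast, ENNReal.toReal_ofReal (by positivity)]
      at hreal
  have hfloor : (2 * H) ^ n / ω < N := by exact_mod_cast Nat.lt_floor_add_one ((2 * H) ^ n / ω)
  exact hcount.not_gt ((div_lt_iff₀ hω).1 hfloor)

end AleksandrovBakelmanPucci

section LpNorm

variable {α : Type*} [MeasurableSpace α] {μ : Measure α} {p : ℝ} {g h : α → ℝ} {G H : ℝ}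

lemma eLpNorm'_smul_le_ofReal {c : ℝ} (hc : 0 ≤ c) (hp : 0 < p)
    (hg : eLpNorm' g p μ ≤ ENNReal.ofReal G) : eLpNorm' (c • g) p μ ≤ ENNReal.ofReal (c * G) := by
  rw [eLpNorm'_const_smul c hp, Real.enorm_of_nonneg hc, ENNReal.ofReal_mul hc]
  gcongr

lemma eLpNorm'_add_le_ofReal (hp : 1 ≤ p) (hg : AEStronglyMeasurable g μ)
    (hh : AEStronglyMeasurable h μ) (hG : 0 ≤ G) (hH : 0 ≤ H)
    (hgG : eLpNorm' g p μ ≤ ENNReal.ofReal G) (hhH : eLpNorm' h p μ ≤ ENNReal.ofReal H) :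
    eLpNorm' (g + h) p μ ≤ ENNReal.ofReal (G + H) := by
  rw [ENNReal.ofReal_add hG hH]
  exact (eLpNorm'_add_le hg hh hp).trans (add_le_add hgG hhH)

lemma eLpNorm'_inv_smul_add_smul_add_le {c K t : ℝ} (hp : 1 ≤ p) (hg : AEStronglyMeasurable g μ)
    (hh : AEStronglyMeasurable h μ) (hG : 0 ≤ G) (hgG : eLpNorm' g p μ ≤ ENNReal.ofReal G)
    (hH : 0 ≤ H) (hHK : H ≤ K) (hhH : eLpNorm' h p μ ≤ ENNReal.ofReal H) (hc : 0 ≤ c)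
    (ht : 0 < t) (hle : G + c * H ≤ t) :
    eLpNorm' (t⁻¹ • (g + c • h) + h) p μ ≤ ENNReal.ofReal (1 + K) := by
  have hp0 : 0 < p := zero_lt_one.trans_le hp
  have hsum : eLpNorm' (g + c • h) p μ ≤ ENNReal.ofReal t :=
    (eLpNorm'_add_le_ofReal hp hg (hh.const_smul c) hG (by positivity) hgG
      (eLpNorm'_smul_le_ofReal hc hp0 hhH)).trans (ENNReal.ofReal_le_ofReal hle)
  have hscaled : eLpNorm' (t⁻¹ • (g + c • h)) p μ ≤ ENNReal.ofReal 1 := by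
    simpa only [inv_mul_cancel₀ ht.ne'] using
      eLpNorm'_smul_le_ofReal (inv_nonneg.2 ht.le) hp0 hsum
  exact eLpNorm'_add_le_ofReal hp ((hg.add (hh.const_smul c)).const_smul _) hh zero_le_one
    (hH.trans hHK) hscaled (hhH.trans (ENNReal.ofReal_le_ofReal hHK))

end LpNorm

section Comparison

open Metric Set

variable {n : ℕ} {lam Lam : ℝ} {b f u : 𝔼 n → ℝ} {Ω : Set (𝔼 n)}

/-- `u` is a classical solution of `L⁺[u] ≥ -f` in `Ω`, where `L⁺[u] = 𝓜⁺(D²u) + b |Du|` with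
`b ≥ 0`; the coefficients need only be measurable. -/
structure IsPucciSubsolution (lam Lam : ℝ) (b f u : 𝔼 n → ℝ) (Ω : Set (𝔼 n)) : Prop where
  contDiffOn : ContDiffOn ℝ 2 u Ω
  aestronglyMeasurable_drift : AEStronglyMeasurable b (volume.restrict Ω)
  aestronglyMeasurable_source : AEStronglyMeasurable f (volume.restrict Ω)
  drift_nonneg : ∀ x ∈ Ω, 0 ≤ b x
  neg_source_le : ∀ x ∈ Ω, -f x ≤ pucciPlus n lam Lam (hess n u x) + b x * gradNorm n u x

namespace IsPucciSubsolution

lemma mono {U : Set (𝔼 n)} (hu : IsPucciSubsolution lam Lam b f u Ω) (hU : U ⊆ Ω) :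
    IsPucciSubsolution lam Lam b f u U where
  contDiffOn := hu.contDiffOn.mono hU
  aestronglyMeasurable_drift := hu.aestronglyMeasurable_drift.mono_set hU
  aestronglyMeasurable_source := hu.aestronglyMeasurable_source.mono_set hU
  drift_nonneg x hx := hu.drift_nonneg x (hU hx)
  neg_source_le x hx := hu.neg_source_le x (hU hx)

variable {w : 𝔼 n → ℝ} {G : ℝ}

lemma mul_trace_neg_hess_sub_le (hu : IsPucciSubsolution lam Lam b f u Ω) (hLam : lam ≤ Lam)
    (hΩ : IsOpen Ω) (hw : ContDiff ℝ 2 w)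
    (hsuper : ∀ x ∈ Ω, ∀ A ∈ ellipticMatrices n lam Lam, (A * hess n w x).trace ≤ 0)
    (hgrad : ∀ x ∈ Ω, gradNorm n w x ≤ G) {x : 𝔼 n} (hx : x ∈ concaveHessianSet (u - w) Ω) :
    lam * (-hess n (u - w) x).trace ≤ max (f x) 0 + G * b x + b x * gradNorm n (u - w) x := by
  obtain ⟨hxΩ, hneg⟩ := hx
  have hux : ContDiffAt ℝ 2 u x := hu.contDiffOn.contDiffAt (hΩ.mem_nhds hxΩ)
  have hhess : hess n u x = hess n w x - -hess n (u - w) x := by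
    rw [hess_sub hux hw.contDiffAt]
    abel
  have hpucci := pucciPlus_sub_le hLam (hsuper x hxΩ) hneg
  rw [← hhess] at hpucci
  have hfderiv : fderiv ℝ u x = fderiv ℝ (u - w) x + fderiv ℝ w x := by
    rw [fderiv_sub (hux.differentiableAt (by norm_num))
      (hw.contDiffAt.differentiableAt (by norm_num)), sub_add_cancel]
  have hgradu : gradNorm n u x ≤ gradNorm n (u - w) x + G := by
    unfold gradNorm
    exact hfderiv ▸ (norm_add_le _ _).trans (by gcongr; exact hgrad x hxΩ)
  nlinarith [hu.neg_source_le x hxΩ, le_max_left (f x) 0,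
    mul_le_mul_of_nonneg_left hgradu (hu.drift_nonneg x hxΩ)]

variable [NeZero n] {z : 𝔼 n} {r F Kb K μ : ℝ}

lemma sub_le_of_le (hu : IsPucciSubsolution lam Lam b f u Ω) (hlam : 0 < lam) (hLam : lam ≤ Lam)
    (hΩ : IsOpen Ω) (hΩr : Ω ⊆ ball z r) (huc : ContinuousOn u (closure Ω)) (hw : ContDiff ℝ 2 w)
    (hsuper : ∀ x ∈ Ω, ∀ A ∈ ellipticMatrices n lam Lam, (A * hess n w x).trace ≤ 0)
    (hG : 0 ≤ G) (hgrad : ∀ x ∈ Ω, gradNorm n w x ≤ G) (hfr : ∀ y ∈ frontier Ω, u y ≤ w y)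
    (hF : 0 ≤ F) (hfF : eLpNorm' (fun y => max (f y) 0) n (volume.restrict Ω) ≤ ENNReal.ofReal F)
    (hKb : 0 ≤ Kb) (hKbK : Kb ≤ K) (hbKb : eLpNorm' b n (volume.restrict Ω) ≤ ENNReal.ofReal Kb)
    (hμ : 0 < μ) (hle : F + G * Kb ≤ μ) {x : 𝔼 n} (hx : x ∈ Ω) :
    u x - w x ≤ abpConst n ((1 + K) / lam) * μ * (2 * r) := by
  have hn : (1 : ℝ) ≤ n := Nat.one_le_cast.2 NeZero.one_le
  have hr : 0 < r := dist_nonneg.trans_lt (hΩr hx)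
  let g : 𝔼 n → ℝ := fun y => max (f y) 0
  have hg : AEStronglyMeasurable g (volume.restrict Ω) :=
    hu.aestronglyMeasurable_source.sup aestronglyMeasurable_const
  have hcoeff : eLpNorm' (μ⁻¹ • (g + G • b) + b) n (volume.restrict Ω) ≤ ENNReal.ofReal (1 + K) :=
    eLpNorm'_inv_smul_add_smul_add_le hn hg hu.aestronglyMeasurable_drift hF hfF hKb hKbK hbKb hG
      hμ hle
  refine le_abpConst_mul (v := u - w) (h := lam⁻¹ • (μ⁻¹ • (g + G • b) + b)) hΩ
    (hu.contDiffOn.sub hw.contDiffOn) (huc.sub hw.continuous.continuousOn)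
    (fun y hy => sub_nonpos.2 (hfr y hy)) (fun y hy => ?_) hμ (fun y hy hslope => ?_)
    (div_nonneg (by linarith) hlam.le) ?_ (by positivity) hx (fun y hy => ?_)
  · have hby := hu.drift_nonneg y hy
    simp only [Pi.smul_apply, Pi.add_apply, smul_eq_mul, g]
    positivity
  · have hby := hu.drift_nonneg y hy.1
    have hsource : g y + G * b y ≤ μ⁻¹ * (g y + G * b y) * gradNorm n (u - w) y := by
      rw [mul_right_comm, ← div_eq_inv_mul]
      exact le_mul_of_one_le_left (by positivity) ((one_le_div hμ).2 hslope)
    rw [Pi.smul_apply, smul_eq_mul, mul_assoc, ← div_eq_inv_mul, le_div_iff₀' hlam]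
    simp only [Pi.add_apply, Pi.smul_apply, smul_eq_mul, add_mul]
    linarith [hu.mul_trace_neg_hess_sub_le hLam hΩ hw hsuper hgrad hy]
  · rw [div_eq_inv_mul]
    exact eLpNorm'_smul_le_ofReal (inv_nonneg.2 hlam.le) (by linarith) hcoeff
  · rw [mem_closedBall]
    linarith [dist_triangle_right y x z, mem_ball.1 (hΩr hy), mem_ball.1 (hΩr hx)]

theorem le_add (hu : IsPucciSubsolution lam Lam b f u Ω) (hlam : 0 < lam) (hLam : lam ≤ Lam)
    (hΩ : IsOpen Ω) (hΩr : Ω ⊆ ball z r) (huc : ContinuousOn u (closure Ω)) (hw : ContDiff ℝ 2 w)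
    (hsuper : ∀ x ∈ Ω, ∀ A ∈ ellipticMatrices n lam Lam, (A * hess n w x).trace ≤ 0)
    (hgrad : ∀ x ∈ Ω, gradNorm n w x ≤ G) (hfr : ∀ y ∈ frontier Ω, u y ≤ w y)
    (hF : 0 ≤ F) (hfF : eLpNorm' (fun y => max (f y) 0) n (volume.restrict Ω) ≤ ENNReal.ofReal F)
    (hKb : 0 ≤ Kb) (hKbK : Kb ≤ K) (hbKb : eLpNorm' b n (volume.restrict Ω) ≤ ENNReal.ofReal Kb)
    {x : 𝔼 n} (hx : x ∈ Ω) :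
    u x ≤ w x + abpConst n ((1 + K) / lam) * (F + G * Kb) * (2 * r) := by
  have hr : 0 < r := dist_nonneg.trans_lt (hΩr hx)
  have hG : 0 ≤ G := (norm_nonneg _).trans (hgrad x hx)
  set C := abpConst n ((1 + K) / lam)
  have hC : 0 < C := abpConst_pos _ _
  refine sub_le_iff_le_add'.1 (le_of_forall_gt_imp_ge_of_dense fun t ht => ?_)
  have hlt : F + G * Kb < t / (C * (2 * r)) := by
    rw [lt_div_iff₀ (by positivity)]
    linarith
  calc u x - w x ≤ C * (t / (C * (2 * r))) * (2 * r) :=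
        hu.sub_le_of_le hlam hLam hΩ hΩr huc hw hsuper hG hgrad hfr hF hfF hKb hKbK hbKb
          ((by positivity : 0 ≤ F + G * Kb).trans_lt hlt) hlt.le hx
    _ = t := by field_simp

end IsPucciSubsolution

end Comparison

section Holder

open Metric Set

variable {n : ℕ} {q : ℝ}

lemma LpNormE_eq_eLpNorm' (hq : 0 < q) (g : 𝔼 n → ℝ) (D : Set (𝔼 n)) :
    LpNormE n q g D = eLpNorm' g q (volume.restrict D) := by
  unfold LpNormE eLpNorm'
  congr 1
  refine lintegral_congr fun y => ?_
  rw [Real.enorm_eq_ofReal_abs, ENNReal.ofReal_rpow_of_nonneg (abs_nonneg _) hq.le]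

lemma LpNormE_mono_set (hq : 0 ≤ q) (g : 𝔼 n → ℝ) {D E : Set (𝔼 n)} (h : D ⊆ E) :
    LpNormE n q g D ≤ LpNormE n q g E :=
  ENNReal.rpow_le_rpow (lintegral_mono_set h) (one_div_nonneg.2 hq)

/-- The constant of the embedding `L^q(B₁) ⊆ L^n(B₁)` on the unit ball of `ℝⁿ`. -/
noncomputable def holderConst (n : ℕ) (q : ℝ) : ℝ :=
  volume.real (ball (0 : 𝔼 n) 1) ^ (1 / (n : ℝ) - 1 / q)

lemma holderConst_nonneg (n : ℕ) (q : ℝ) : 0 ≤ holderConst n q := by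
  unfold holderConst
  positivity

lemma volume_ball_rpow [NeZero n] (hq : n ≤ q) (z : 𝔼 n) {r : ℝ} (hr : 0 ≤ r) :
    volume (ball z r) ^ (1 / (n : ℝ) - 1 / q) =
      ENNReal.ofReal (holderConst n q * r ^ (1 - n / q)) := by
  have hn : (0 : ℝ) < n := Nat.cast_pos.2 (NeZero.pos n)
  have hexp : 0 ≤ 1 / (n : ℝ) - 1 / q := sub_nonneg.2 (one_div_le_one_div_of_le hn hq)
  rw [Measure.addHaar_ball _ _ hr, finrank_euclideanSpace_fin,
    ← ofReal_measureReal measure_ball_lt_top.ne, ← ENNReal.ofReal_mul (by positivity),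
    ENNReal.ofReal_rpow_of_nonneg (by positivity) hexp,
    Real.mul_rpow (by positivity) measureReal_nonneg, ← Real.rpow_natCast, ← Real.rpow_mul hr,
    mul_comm, holderConst]
  congr 3
  field_simp

lemma eLpNorm'_le_of_LpNormE_le [NeZero n] (hq : n ≤ q) {g : 𝔼 n → ℝ} {D E : Set (𝔼 n)} {z : 𝔼 n}
    {r X : ℝ} (hg : AEStronglyMeasurable g (volume.restrict D)) (hDE : D ⊆ E)
    (hDr : D ⊆ ball z r) (hr : 0 ≤ r) (hgX : LpNormE n q g E ≤ ENNReal.ofReal X) :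
    eLpNorm' g n (volume.restrict D) ≤
      ENNReal.ofReal (X * (holderConst n q * r ^ (1 - n / q))) := by
  have hn : (0 : ℝ) < n := Nat.cast_pos.2 (NeZero.pos n)
  have hpos : 0 ≤ holderConst n q * r ^ (1 - n / q) :=
    mul_nonneg (holderConst_nonneg n q) (Real.rpow_nonneg hr _)
  rw [LpNormE_eq_eLpNorm' (hn.trans_le hq)] at hgX
  rw [ENNReal.ofReal_mul' hpos, ← volume_ball_rpow hq z hr]
  refine (eLpNorm'_le_eLpNorm'_mul_rpow_measure_univ hn hq hg).trans (mul_le_mul' ?_ ?_)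
  · exact (eLpNorm'_mono_measure g (Measure.restrict_mono_set _ hDE) (hn.le.trans hq)).trans hgX
  · rw [Measure.restrict_apply_univ]
    exact ENNReal.rpow_le_rpow (measure_mono hDr)
      (sub_nonneg.2 (one_div_le_one_div_of_le hn hq))

end Holder

section Barrier

open InnerProductSpace

variable {n : ℕ} {z ν y : 𝔼 n} {B m r a : ℝ}

/-- The quadratic barrier at the boundary point `z` of a domain with outer normal `ν`. In terms of
the height `l = ⟪ν, z - y⟫` over the supporting hyperplane it is
`(m / r) |y - z|² + a l + B (m / r) l (r - l)`: the concave last term makes it a supersolution of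
the Pucci equation for large `B`. -/
noncomputable def barrier (z ν : 𝔼 n) (B m r a : ℝ) (y : 𝔼 n) : ℝ :=
  m / r * ‖y - z‖ ^ 2 + a * inner ℝ ν (z - y) +
    B * (m / r) * (inner ℝ ν (z - y) * (r - inner ℝ ν (z - y)))

lemma inner_sub_le_norm_sub (hν : ‖ν‖ = 1) : inner ℝ ν (z - y) ≤ ‖y - z‖ := by
  simpa only [hν, one_mul, norm_sub_rev] using real_inner_le_norm ν (z - y)

lemma contDiff_barrier : ContDiff ℝ 2 (barrier z ν B m r a) := by
  have hsq : ContDiff ℝ 2 fun y => ‖y - z‖ ^ 2 := (contDiff_id.sub contDiff_const).norm_sq ℝ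
  have hl : ContDiff ℝ 2 fun y => inner ℝ ν (z - y) :=
    (innerSL ℝ ν).contDiff.comp (contDiff_const.sub contDiff_id)
  exact ((contDiff_const.mul hsq).add (contDiff_const.mul hl)).add
    (contDiff_const.mul (hl.mul (contDiff_const.sub hl)))

lemma hasFDerivAt_inner_const_sub : HasFDerivAt (fun y => inner ℝ ν (z - y)) (-innerSL ℝ ν) y := by
  simp only [inner_sub_right]
  exact (innerSL ℝ ν).hasFDerivAt.const_sub (inner ℝ ν z)

lemma hasFDerivAt_barrier :
    HasFDerivAt (barrier z ν B m r a)
      ((2 * (m / r)) • innerSL ℝ (y - z) -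
        (a + B * (m / r) * (r - 2 * inner ℝ ν (z - y))) • innerSL ℝ ν) y := by
  have hsq : HasFDerivAt (fun y => ‖y - z‖ ^ 2) (2 • innerSL ℝ (y - z)) y := by
    simpa using ((hasFDerivAt_id y).sub_const z).norm_sq
  have hl := hasFDerivAt_inner_const_sub (z := z) (ν := ν) (y := y)
  refine (((hsq.const_mul (m / r)).add (hl.const_mul a)).add
    ((hl.mul (hl.const_sub r)).const_mul (B * (m / r)))).congr_fderiv ?_
  ext h
  simp only [map_sub, smul_neg, neg_neg, smul_add, add_apply, smul_apply, sub_apply,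
    coe_innerSL_apply, nsmul_eq_mul, Nat.cast_ofNat, smul_eq_mul, neg_apply]
  ring

lemma gradNorm_barrier_le (hB : 0 ≤ B) (hm : 0 ≤ m) (hr : 0 < r) (ha : 0 ≤ a) (hν : ‖ν‖ = 1)
    (hl : 0 ≤ inner ℝ ν (z - y)) (hy : ‖y - z‖ ≤ r) :
    gradNorm n (barrier z ν B m r a) y ≤ a + (2 + B) * m := by
  have hlr := (inner_sub_le_norm_sub (z := z) hν).trans hy
  have hmr : m / r * r = m := div_mul_cancel₀ m hr.ne'
  have hradial : ‖(2 * (m / r)) • innerSL ℝ (y - z)‖ ≤ 2 * m := by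
    rw [norm_smul, innerSL_apply_norm, Real.norm_of_nonneg (by positivity), mul_assoc, ← hmr]
    gcongr
    exact hmr.le
  have hnormal : ‖(a + B * (m / r) * (r - 2 * inner ℝ ν (z - y))) • innerSL ℝ ν‖ ≤ a + B * m := by
    have habs : |r - 2 * inner ℝ ν (z - y)| ≤ r := abs_le.2 ⟨by linarith, by linarith⟩
    rw [norm_smul, innerSL_apply_norm, hν, mul_one, Real.norm_eq_abs]
    refine (abs_add_le _ _).trans ?_
    rw [abs_of_nonneg ha, abs_mul, abs_of_nonneg (by positivity : 0 ≤ B * (m / r))]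
    calc a + B * (m / r) * |r - 2 * inner ℝ ν (z - y)| ≤ a + B * (m / r) * r := by gcongr
      _ = a + B * m := by rw [mul_assoc, hmr]
  rw [gradNorm, hasFDerivAt_barrier.fderiv]
  linarith [norm_sub_le ((2 * (m / r)) • innerSL ℝ (y - z))
    ((a + B * (m / r) * (r - 2 * inner ℝ ν (z - y))) • innerSL ℝ ν)]

lemma hess_barrier (z ν : 𝔼 n) (B m r a : ℝ) (y : 𝔼 n) :
    hess n (barrier z ν B m r a) y =
      (2 * (m / r)) • (1 - B • Matrix.vecMulVec ν.ofLp ν.ofLp) := by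
  ext i j
  have hpartial : (fun y => fderiv ℝ (barrier z ν B m r a) y (EuclideanSpace.single j 1)) =
      fun y => 2 * (m / r) * (y j - z j) -
        (a + B * (m / r) * (r - 2 * inner ℝ ν (z - y))) * ν j := by
    funext y
    simp [hasFDerivAt_barrier.fderiv, EuclideanSpace.inner_single_right]
  have hl := hasFDerivAt_inner_const_sub (z := z) (ν := ν) (y := y)
  have hcoord : HasFDerivAt (fun y : 𝔼 n => y j) (EuclideanSpace.proj j : 𝔼 n →L[ℝ] ℝ) y :=
    (EuclideanSpace.proj j : 𝔼 n →L[ℝ] ℝ).hasFDerivAt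
  have hsecond := ((hcoord.sub_const (z j)).const_mul (2 * (m / r))).fun_sub
    (((((hl.const_mul 2).const_sub r).const_mul (B * (m / r))).const_add a).mul_const (ν j))
  rw [hess, hpartial, hsecond.fderiv]
  simp only [smul_neg, neg_neg, sub_apply, smul_apply, PiLp.proj_apply, PiLp.single_apply, eq_comm,
    smul_eq_mul, mul_ite, mul_one, mul_zero, coe_innerSL_apply, EuclideanSpace.inner_single_right,
    Real.ringHom_apply, one_mul, Matrix.smul_apply, Matrix.sub_apply, Matrix.one_apply,
    Matrix.vecMulVec_apply]
  split_ifs <;> ring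

lemma trace_mul_hess_barrier_nonpos {lam Lam : ℝ} (hB : 0 ≤ B) (hBlam : n * Lam ≤ B * lam)
    (hm : 0 ≤ m) (hr : 0 < r) (hν : ‖ν‖ = 1) {A : Matrix (Fin n) (Fin n) ℝ}
    (hA : A ∈ ellipticMatrices n lam Lam) :
    (A * hess n (barrier z ν B m r a) y).trace ≤ 0 := by
  rw [hess_barrier, Matrix.mul_smul, Matrix.trace_smul]
  exact smul_nonpos_of_nonneg_of_nonpos (by positivity)
    (trace_mul_one_sub_smul_vecMulVec_nonpos hA hB hBlam hν)

lemma le_barrier (hB : 0 ≤ B) (hm : 0 ≤ m) (hr : 0 < r) (hν : ‖ν‖ = 1)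
    (hl : 0 ≤ inner ℝ ν (z - y)) (hy : ‖y - z‖ ≤ r) :
    m / r * ‖y - z‖ ^ 2 + a * inner ℝ ν (z - y) ≤ barrier z ν B m r a y := by
  have hlr : 0 ≤ r - inner ℝ ν (z - y) :=
    sub_nonneg.2 ((inner_sub_le_norm_sub (z := z) hν).trans hy)
  rw [barrier, le_add_iff_nonneg_right]
  positivity

lemma barrier_le (hB : 0 ≤ B) (hm : 0 ≤ m) (hr : 0 < r) (hy : ‖y - z‖ ≤ r / 2) :
    barrier z ν B m r a y ≤ (a + B * m) * inner ℝ ν (z - y) + m * r / 4 := by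
  have hquad : m / r * ‖y - z‖ ^ 2 ≤ m * r / 4 := by
    calc m / r * ‖y - z‖ ^ 2 ≤ m / r * (r / 2) ^ 2 := by gcongr
      _ = m * r / 4 := by field_simp; norm_num
  have hlin : B * (m / r) * (inner ℝ ν (z - y) * (r - inner ℝ ν (z - y))) ≤
      B * m * inner ℝ ν (z - y) := by
    have hdrop : B * (m / r) * (inner ℝ ν (z - y) * (r - inner ℝ ν (z - y))) =
        B * m * inner ℝ ν (z - y) - B * (m / r) * inner ℝ ν (z - y) ^ 2 := by
      field_simp
    rw [hdrop, sub_le_self_iff]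
    positivity
  rw [barrier]
  linarith

end Barrier

section BoundaryIteration

open Metric Set

lemma frontier_inter_ball_subset {X : Type*} [PseudoMetricSpace X] (s : Set X) (z : X) (r : ℝ) :
    frontier (s ∩ ball z r) ⊆ frontier s ∩ closedBall z r ∪ s ∩ sphere z r := by
  intro y hy
  have hball : y ∈ closedBall z r :=
    closure_ball_subset_closedBall (closure_mono inter_subset_right hy.1)
  rcases frontier_inter_subset s (ball z r) hy with ⟨hs, -⟩ | ⟨hs, hr⟩
  · exact Or.inl ⟨hs, hball⟩
  · by_cases hys : y ∈ interior s
    · exact Or.inr ⟨interior_subset hys, frontier_ball_subset_sphere hr⟩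
    · exact Or.inl ⟨⟨hs, hys⟩, hball⟩

variable {n : ℕ} {lam Lam q K : ℝ} {b f u : 𝔼 n → ℝ} {Ω : Set (𝔼 n)} {z ν : 𝔼 n}
  {B a m r : ℝ}

/-- `ν` is a unit vector pointing out of `Ω` at `z ∉ Ω`, orthogonal to a hyperplane through `z` that
supports `Ω`. -/
structure IsOuterNormal (Ω : Set (𝔼 n)) (z ν : 𝔼 n) : Prop where
  notMem : z ∉ Ω
  norm_eq_one : ‖ν‖ = 1
  inner_nonneg : ∀ y ∈ closure Ω, 0 ≤ inner ℝ ν (z - y)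

/-- The factor by which the slope bound may grow, per unit of `r ^ (1 - n / q)`, when the boundary
iteration passes from the radius `r ≤ d0` to `r / 2`. -/
noncomputable def growthConst (n : ℕ) (lam B q d0 K : ℝ) : ℝ :=
  16 * B * abpConst n ((1 + K * (holderConst n q * d0 ^ (1 - n / q))) / lam) * (1 + K) *
    holderConst n q

lemma growthConst_nonneg {d0 : ℝ} (hB : 0 ≤ B) (hK : 0 ≤ K) : 0 ≤ growthConst n lam B q d0 K :=
  mul_nonneg (mul_nonneg (mul_nonneg (by positivity) (abpConst_pos _ _).le) (by positivity))
    (holderConst_nonneg n q)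

variable [NeZero n]

namespace IsPucciSubsolution

lemma le_add_of_closedBall_half (hu : IsPucciSubsolution lam Lam b f u Ω) (hlam : 0 < lam)
    (hLam : lam ≤ Lam) (hΩ : IsOpen Ω) (huc : ContinuousOn u (closure Ω))
    (hu0 : ∀ y ∈ frontier Ω, u y ≤ 0) (hν : IsOuterNormal Ω z ν) (hB : 0 ≤ B)
    (hBlam : n * Lam ≤ B * lam) (ha : 0 ≤ a) (hm : 0 ≤ m) (hr : 0 < r)
    (hur : ∀ y ∈ Ω ∩ closedBall z r, u y ≤ a * inner ℝ ν (z - y) + m * r) {F Kb : ℝ} (hF : 0 ≤ F)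
    (hfF : eLpNorm' (fun y => max (f y) 0) n (volume.restrict (Ω ∩ ball z r)) ≤ ENNReal.ofReal F)
    (hKb : 0 ≤ Kb) (hKbK : Kb ≤ K)
    (hbKb : eLpNorm' b n (volume.restrict (Ω ∩ ball z r)) ≤ ENNReal.ofReal Kb) {y : 𝔼 n}
    (hy : y ∈ Ω ∩ closedBall z (r / 2)) :
    u y ≤ (a + B * m) * inner ℝ ν (z - y) + m * r / 4 +
      abpConst n ((1 + K) / lam) * (F + (a + (2 + B) * m) * Kb) * (2 * r) := by
  have hnorm {y : 𝔼 n} (hy : y ∈ closedBall z r) : ‖y - z‖ ≤ r := mem_closedBall_iff_norm.1 hy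
  have hfrontier : ∀ y ∈ frontier (Ω ∩ ball z r), u y ≤ barrier z ν B m r a y := by
    intro y hy
    rcases frontier_inter_ball_subset Ω z r hy with ⟨hyΩ, hyr⟩ | ⟨hyΩ, hyr⟩
    · have hl := hν.inner_nonneg y hyΩ.1
      exact (hu0 y hyΩ).trans
        ((by positivity : 0 ≤ m / r * ‖y - z‖ ^ 2 + a * inner ℝ ν (z - y)).trans
          (le_barrier hB hm hr hν.norm_eq_one hl (hnorm hyr)))
    · have hyr' := sphere_subset_closedBall hyr
      have hquad : m / r * ‖y - z‖ ^ 2 = m * r := by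
        rw [mem_sphere_iff_norm.1 hyr]
        field_simp
      linarith [hur y ⟨hyΩ, hyr'⟩,
        le_barrier (a := a) hB hm hr hν.norm_eq_one (hν.inner_nonneg y (subset_closure hyΩ))
          (hnorm hyr')]
  have hgrad : ∀ y ∈ Ω ∩ ball z r, gradNorm n (barrier z ν B m r a) y ≤ a + (2 + B) * m :=
    fun y hy => gradNorm_barrier_le hB hm hr ha hν.norm_eq_one
      (hν.inner_nonneg y (subset_closure hy.1)) (hnorm (ball_subset_closedBall hy.2))
  refine ((hu.mono inter_subset_left).le_add hlam hLam (hΩ.inter isOpen_ball) inter_subset_right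
    (huc.mono (closure_mono inter_subset_left)) contDiff_barrier
    (fun y _ A => trace_mul_hess_barrier_nonpos hB hBlam hm hr hν.norm_eq_one)
    hgrad hfrontier hF hfF hKb hKbK hbKb
    ⟨hy.1, closedBall_subset_ball (by linarith) hy.2⟩).trans ?_
  gcongr
  exact barrier_le hB hm hr (mem_closedBall_iff_norm.1 hy.2)

-- The weight `4 B` lets the halving of `m` absorb the term `B m` that the barrier adds to `a`.
lemma exists_bound_closedBall_half (hu : IsPucciSubsolution lam Lam b f u Ω) (hlam : 0 < lam)
    (hLam : lam ≤ Lam) (hΩ : IsOpen Ω) (huc : ContinuousOn u (closure Ω))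
    (hu0 : ∀ y ∈ frontier Ω, u y ≤ 0) (hν : IsOuterNormal Ω z ν) (hB : 1 ≤ B)
    (hBlam : n * Lam ≤ B * lam) (hq : n ≤ q) (hK : 0 ≤ K) {d0 F : ℝ} (hF : 0 ≤ F)
    (hbK : LpNormE n q b (Ω ∩ ball z d0) ≤ ENNReal.ofReal K)
    (hfF : LpNormE n q (fun y => max (f y) 0) (Ω ∩ ball z d0) ≤ ENNReal.ofReal F)
    (ha : 0 ≤ a) (hm : 0 ≤ m) (hr : 0 < r) (hrd : r ≤ d0)
    (hur : ∀ y ∈ Ω ∩ closedBall z r, u y ≤ a * inner ℝ ν (z - y) + m * r) :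
    ∃ a' m' : ℝ, 0 ≤ a' ∧ 0 ≤ m' ∧
      (∀ y ∈ Ω ∩ closedBall z (r / 2), u y ≤ a' * inner ℝ ν (z - y) + m' * (r / 2)) ∧
      a' + 4 * B * m' + F ≤
        (a + 4 * B * m + F) * (1 + growthConst n lam B q d0 K * r ^ (1 - n / q)) := by
  have hα : 0 ≤ 1 - (n : ℝ) / q := sub_nonneg.2 (div_le_one_of_le₀ hq (n.cast_nonneg.trans hq))
  have hW := holderConst_nonneg n q
  have hsub : Ω ∩ ball z r ⊆ Ω ∩ ball z d0 := inter_subset_inter_right _ (ball_subset_ball hrd)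
  have hur' := hu.mono (inter_subset_left : Ω ∩ ball z r ⊆ Ω)
  have hstep {y} (hy) := hu.le_add_of_closedBall_half (y := y) hlam hLam hΩ huc hu0 hν
    (zero_le_one.trans hB) hBlam ha hm hr hur
    (K := K * (holderConst n q * d0 ^ (1 - n / q)))
    (F := F * (holderConst n q * r ^ (1 - n / q)))
    (Kb := K * (holderConst n q * r ^ (1 - n / q))) (by positivity)
    (eLpNorm'_le_of_LpNormE_le hq (hur'.aestronglyMeasurable_source.sup aestronglyMeasurable_const)
      hsub inter_subset_right hr.le hfF)
    (by positivity) (by gcongr)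
    (eLpNorm'_le_of_LpNormE_le hq hur'.aestronglyMeasurable_drift hsub inter_subset_right hr.le hbK)
    hy
  rw [growthConst]
  set C := abpConst n ((1 + K * (holderConst n q * d0 ^ (1 - n / q))) / lam)
  set W := holderConst n q
  set t := r ^ (1 - n / q)
  have hC : 0 < C := abpConst_pos _ _
  refine ⟨a + B * m, m / 2 + 4 * C * (F * (W * t) + (a + (2 + B) * m) * (K * (W * t))),
    by positivity, by positivity, fun y hy => (hstep hy).trans_eq (by ring), ?_⟩
  have hBm : 0 ≤ (B - 1) * m := mul_nonneg (sub_nonneg.2 hB) hm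
  have hslope : F + (a + (2 + B) * m) * K ≤ (1 + K) * (a + 4 * B * m + F) := by
    nlinarith [mul_nonneg hK hF, mul_nonneg hK hBm,
      mul_nonneg hK (mul_nonneg (zero_le_one.trans hB) hm)]
  have hgrowth := mul_le_mul_of_nonneg_left hslope (by positivity : 0 ≤ 16 * B * C * (W * t))
  nlinarith [mul_nonneg (zero_le_one.trans hB) hm]

end IsPucciSubsolution

end BoundaryIteration

section BoundaryEstimate

open Metric Set

lemma sum_div_two_pow_rpow_le {d α : ℝ} (hd : 0 ≤ d) (hα : 0 < α) (k : ℕ) :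
    ∑ j ∈ Finset.range k, (d / 2 ^ j) ^ α ≤ d ^ α / (1 - (1 / 2 : ℝ) ^ α) := by
  have hs0 : 0 ≤ (1 / 2 : ℝ) ^ α := by positivity
  have hs1 : (1 / 2 : ℝ) ^ α < 1 := Real.rpow_lt_one (by norm_num) (by norm_num) hα
  have hterm (j : ℕ) : (d / 2 ^ j) ^ α = d ^ α * ((1 / 2 : ℝ) ^ α) ^ j := by
    rw [div_eq_mul_one_div, Real.mul_rpow hd (by positivity), ← one_div_pow,
      ← Real.rpow_natCast_mul (by norm_num), mul_comm (j : ℝ), Real.rpow_mul_natCast (by norm_num)]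
  simp only [hterm, ← Finset.mul_sum]
  rw [div_eq_mul_inv (d ^ α)]
  refine mul_le_mul_of_nonneg_left ?_ (by positivity)
  rw [← tsum_geometric_of_lt_one hs0 hs1]
  exact (summable_geometric_of_lt_one hs0 hs1).sum_le_tsum _ fun j _ => by positivity

/-- The total growth of the slope bound over all dyadic radii below `d0`. -/
noncomputable def totalGrowthConst (n : ℕ) (lam B q d0 K : ℝ) : ℝ :=
  Real.exp (growthConst n lam B q d0 K *
    (d0 ^ (1 - n / q) / (1 - (1 / 2 : ℝ) ^ (1 - n / q))))

lemma totalGrowthConst_pos (n : ℕ) (lam B q d0 K : ℝ) : 0 < totalGrowthConst n lam B q d0 K :=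
  Real.exp_pos _

lemma one_le_totalGrowthConst {n : ℕ} {lam B q d0 K : ℝ} (hB : 0 ≤ B) (hK : 0 ≤ K) (hd0 : 0 ≤ d0)
    (hq : n < q) : 1 ≤ totalGrowthConst n lam B q d0 K := by
  have hα : 0 ≤ 1 - (n : ℝ) / q :=
    sub_nonneg.2 ((div_le_one (n.cast_nonneg.trans_lt hq)).2 hq.le)
  have hs : (1 / 2 : ℝ) ^ (1 - (n : ℝ) / q) ≤ 1 := Real.rpow_le_one (by norm_num) (by norm_num) hα
  exact Real.one_le_exp (mul_nonneg (growthConst_nonneg hB hK)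
    (div_nonneg (Real.rpow_nonneg hd0 _) (sub_nonneg.2 hs)))

/-- The constant of the global bound `u ≤ C ‖f⁺‖_{L^p}` in a domain contained in a ball of
radius `R`. -/
noncomputable def globalBoundConst (n : ℕ) (lam p q K R : ℝ) : ℝ :=
  abpConst n ((1 + K * (holderConst n q * R ^ (1 - n / q))) / lam) *
    (holderConst n p * R ^ (1 - n / p)) * (2 * R)

lemma globalBoundConst_nonneg (n : ℕ) (lam p q K : ℝ) {R : ℝ} (hR : 0 ≤ R) :
    0 ≤ globalBoundConst n lam p q K R :=
  mul_nonneg (mul_nonneg (abpConst_pos _ _).le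
    (mul_nonneg (holderConst_nonneg n p) (Real.rpow_nonneg hR _))) (by positivity)

variable {n : ℕ} [NeZero n] {lam Lam q K : ℝ} {b f u : 𝔼 n → ℝ} {Ω : Set (𝔼 n)} {z ν : 𝔼 n}
  {B d0 F M : ℝ}

namespace IsPucciSubsolution

lemma exists_bound_closedBall_div_two_pow (hu : IsPucciSubsolution lam Lam b f u Ω) (hlam : 0 < lam)
    (hLam : lam ≤ Lam) (hΩ : IsOpen Ω) (huc : ContinuousOn u (closure Ω))
    (hu0 : ∀ y ∈ frontier Ω, u y ≤ 0) (hν : IsOuterNormal Ω z ν) (hB : 1 ≤ B)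
    (hBlam : n * Lam ≤ B * lam) (hq : n ≤ q) (hK : 0 ≤ K) (hd0 : 0 < d0) (hF : 0 ≤ F)
    (hbK : LpNormE n q b (Ω ∩ ball z d0) ≤ ENNReal.ofReal K)
    (hfF : LpNormE n q (fun y => max (f y) 0) (Ω ∩ ball z d0) ≤ ENNReal.ofReal F)
    (hM : 0 ≤ M) (huM : ∀ y ∈ Ω, u y ≤ M) (k : ℕ) :
    ∃ a m : ℝ, 0 ≤ a ∧ 0 ≤ m ∧
      (∀ y ∈ Ω ∩ closedBall z (d0 / 2 ^ k), u y ≤ a * inner ℝ ν (z - y) + m * (d0 / 2 ^ k)) ∧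
      a + 4 * B * m + F ≤ (4 * B * (M / d0) + F) * Real.exp
        (growthConst n lam B q d0 K * ∑ j ∈ Finset.range k, (d0 / 2 ^ j) ^ (1 - n / q)) := by
  induction k with
  | zero =>
    refine ⟨0, M / d0, le_rfl, by positivity, fun y hy => ?_, by simp⟩
    rw [zero_mul, zero_add, pow_zero, div_one, div_mul_cancel₀ M hd0.ne']
    exact huM y hy.1
  | succ k ih =>
    obtain ⟨a, m, ha, hm, hur, hle⟩ := ih
    obtain ⟨a', m', ha', hm', hur', hle'⟩ :=
      hu.exists_bound_closedBall_half hlam hLam hΩ huc hu0 hν hB hBlam hq hK hF hbK hfF ha hm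
        (by positivity) (div_le_self hd0.le (one_le_pow₀ one_le_two)) hur
    refine ⟨a', m', ha', hm', by simpa only [pow_succ, div_div] using hur', hle'.trans ?_⟩
    rw [Finset.sum_range_succ, mul_add (growthConst _ _ _ _ _ _), Real.exp_add, ← mul_assoc]
    refine (mul_le_mul_of_nonneg_left ?_ (by positivity)).trans
      (mul_le_mul_of_nonneg_right hle (Real.exp_nonneg _))
    rw [add_comm]
    exact Real.add_one_le_exp _

theorem le_mul_dist (hu : IsPucciSubsolution lam Lam b f u Ω) (hlam : 0 < lam)
    (hLam : lam ≤ Lam) (hΩ : IsOpen Ω) (huc : ContinuousOn u (closure Ω))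
    (hu0 : ∀ y ∈ frontier Ω, u y ≤ 0) (hν : IsOuterNormal Ω z ν) (hB : 1 ≤ B)
    (hBlam : n * Lam ≤ B * lam) (hq : n < q) (hK : 0 ≤ K) (hd0 : 0 < d0) (hF : 0 ≤ F)
    (hbK : LpNormE n q b (Ω ∩ ball z d0) ≤ ENNReal.ofReal K)
    (hfF : LpNormE n q (fun y => max (f y) 0) (Ω ∩ ball z d0) ≤ ENNReal.ofReal F)
    (hM : 0 ≤ M) (huM : ∀ y ∈ Ω, u y ≤ M) {x : 𝔼 n} (hx : x ∈ Ω) (hxz : dist x z ≤ d0) :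
    u x ≤ totalGrowthConst n lam B q d0 K * (4 * B * (M / d0) + F) * dist x z := by
  have hB0 : 0 ≤ B := zero_le_one.trans hB
  have hδ : 0 < dist x z := dist_pos.2 fun h => hν.notMem (h ▸ hx)
  have hα : 0 < 1 - (n : ℝ) / q :=
    sub_pos.2 ((div_lt_one (n.cast_nonneg.trans_lt hq)).2 hq)
  obtain ⟨k, hk, hk'⟩ := exists_nat_pow_near_of_lt_one (div_pos hδ hd0) ((div_le_one hd0).2 hxz)
    one_half_pos one_half_lt_one
  rw [lt_div_iff₀ hd0, one_div_pow, one_div_mul_eq_div, pow_succ, ← div_div] at hk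
  rw [div_le_iff₀ hd0, one_div_pow, one_div_mul_eq_div] at hk'
  obtain ⟨a, m, ha, hm, hur, hle⟩ := hu.exists_bound_closedBall_div_two_pow hlam hLam hΩ huc hu0 hν
    hB hBlam hq.le hK hd0 hF hbK hfF hM huM k
  have hl : inner ℝ ν (z - x) ≤ dist x z := dist_eq_norm x z ▸ inner_sub_le_norm_sub hν.norm_eq_one
  have hBm : m ≤ B * m := le_mul_of_one_le_left hm hB
  have hexp : Real.exp (growthConst n lam B q d0 K *
      ∑ j ∈ Finset.range k, (d0 / 2 ^ j) ^ (1 - n / q)) ≤ totalGrowthConst n lam B q d0 K :=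
    Real.exp_le_exp.2 (mul_le_mul_of_nonneg_left (sum_div_two_pow_rpow_le hd0.le hα k)
      (growthConst_nonneg hB0 hK))
  calc u x ≤ a * inner ℝ ν (z - x) + m * (d0 / 2 ^ k) := hur x ⟨hx, hk'⟩
    _ ≤ a * dist x z + m * (2 * dist x z) := by gcongr; linarith
    _ ≤ (a + 4 * B * m + F) * dist x z := by
      rw [← mul_assoc, ← add_mul]
      refine mul_le_mul_of_nonneg_right ?_ hδ.le
      linarith
    _ ≤ totalGrowthConst n lam B q d0 K * (4 * B * (M / d0) + F) * dist x z := by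
      rw [mul_comm (totalGrowthConst _ _ _ _ _ _)]
      gcongr
      exact hle.trans (by gcongr)

lemma le_globalBoundConst_mul (hu : IsPucciSubsolution lam Lam b f u Ω) (hlam : 0 < lam)
    (hLam : lam ≤ Lam) (hΩ : IsOpen Ω) {c : 𝔼 n} {p R : ℝ} (hΩR : Ω ⊆ ball c R)
    (huc : ContinuousOn u (closure Ω)) (hu0 : ∀ y ∈ frontier Ω, u y ≤ 0) (hp : n ≤ p) (hq : n ≤ q)
    (hK : 0 ≤ K) (hbK : LpNormE n q b Ω ≤ ENNReal.ofReal K) (hF : 0 ≤ F)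
    (hfF : LpNormE n p (fun y => max (f y) 0) Ω ≤ ENNReal.ofReal F) {x : 𝔼 n} (hx : x ∈ Ω) :
    u x ≤ globalBoundConst n lam p q K R * F := by
  have hR : 0 < R := dist_nonneg.trans_lt (hΩR hx)
  have hWp := holderConst_nonneg n p
  have hWq := holderConst_nonneg n q
  have hzero : hess n (0 : 𝔼 n → ℝ) = 0 := funext (hess_continuousLinearMap 0)
  refine (hu.le_add (w := 0) (G := 0) hlam hLam hΩ hΩR huc contDiff_const
    (fun y _ A _ => by simp [hzero]) (fun y _ => by simp [gradNorm]) hu0 ?_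
    (eLpNorm'_le_of_LpNormE_le hp (hu.aestronglyMeasurable_source.sup aestronglyMeasurable_const)
      subset_rfl hΩR hR.le hfF) ?_ le_rfl
    (eLpNorm'_le_of_LpNormE_le hq hu.aestronglyMeasurable_drift subset_rfl hΩR hR.le hbK)
    hx).trans_eq ?_
  · positivity
  · positivity
  · rw [globalBoundConst, Pi.zero_apply]
    ring

end IsPucciSubsolution

end BoundaryEstimate

section ConvexDomain

open Metric Set

lemma exists_norm_eq_one_smul_eq {E : Type*} [NormedAddCommGroup E] [NormedSpace ℝ E] [Nontrivial E]
    (x : E) : ∃ v : E, ‖v‖ = 1 ∧ ‖x‖ • v = x := by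
  rcases eq_or_ne x 0 with rfl | hx
  · obtain ⟨v, hv⟩ := exists_norm_eq E zero_le_one
    exact ⟨v, hv, by simp⟩
  · exact ⟨‖x‖⁻¹ • x, norm_smul_inv_norm hx, smul_inv_smul₀ (norm_ne_zero_iff.2 hx) x⟩

lemma infDist_compl_ball {E : Type*} [NormedAddCommGroup E] [NormedSpace ℝ E] [Nontrivial E]
    {c x : E} {r : ℝ} (hx : x ∈ ball c r) : infDist x (ball c r)ᶜ = r - dist x c := by
  have hr : 0 < r := pos_of_mem_ball hx
  obtain ⟨v, hv, hxv⟩ := exists_norm_eq_one_smul_eq (x - c)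
  have hz : c + r • v ∈ (ball c r)ᶜ := by
    simp [norm_smul, hv, abs_of_pos hr]
  have hdist : dist x (c + r • v) = r - dist x c := by
    rw [mem_ball_iff_norm] at hx
    rw [dist_eq_norm, dist_eq_norm, ← sub_sub]
    nth_rw 1 [← hxv]
    rw [← sub_smul, norm_smul, hv, mul_one, Real.norm_of_nonpos (by linarith), neg_sub]
  refine le_antisymm (hdist ▸ infDist_le_dist_of_mem hz) ((le_infDist ⟨_, hz⟩).2 fun y hy => ?_)
  have hy' : r ≤ dist y c := not_lt.1 hy
  linarith [dist_triangle_left y c x]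

lemma exists_unit_inner_nonneg {E : Type*} [NormedAddCommGroup E] [InnerProductSpace ℝ E]
    [CompleteSpace E] {s : Set E} (hs : IsOpen s) (hconv : Convex ℝ s) (hne : s.Nonempty) {z : E}
    (hz : z ∉ s) : ∃ ν : E, ‖ν‖ = 1 ∧ ∀ y ∈ closure s, 0 ≤ inner ℝ ν (z - y) := by
  obtain ⟨φ, hφ⟩ := geometric_hahn_banach_open_point hconv hs hz
  set w := (InnerProductSpace.toDual ℝ E).symm φ
  have hinner (y : E) : inner ℝ w y = φ y := InnerProductSpace.toDual_symm_apply
  have hw : w ≠ 0 := by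
    obtain ⟨y, hy⟩ := hne
    intro h
    simpa [← hinner, h] using hφ y hy
  have hclosed : IsClosed {y | 0 ≤ inner ℝ (‖w‖⁻¹ • w) (z - y)} :=
    isClosed_le continuous_const (by fun_prop)
  refine ⟨‖w‖⁻¹ • w, norm_smul_inv_norm hw, fun y hy => closure_minimal ?_ hclosed hy⟩
  intro y hy
  have hφy : 0 ≤ φ (z - y) := map_sub φ z y ▸ sub_nonneg.2 (hφ y hy).le
  rw [mem_ofPred_eq, real_inner_smul_left, hinner]
  positivity

variable {n : ℕ} {Ω : Set (𝔼 n)}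

lemma exists_isOuterNormal_dist_eq_infDist (hΩ : IsOpen Ω) (hconv : Convex ℝ Ω) (hne : Ω ≠ univ)
    {x : 𝔼 n} (hx : x ∈ Ω) : ∃ z ν, IsOuterNormal Ω z ν ∧ dist x z = infDist x Ωᶜ := by
  obtain ⟨z, hz, hxz⟩ := hΩ.isClosed_compl.exists_infDist_eq_dist (nonempty_compl.2 hne) x
  obtain ⟨ν, hν, hinner⟩ := exists_unit_inner_nonneg hΩ hconv ⟨x, hx⟩ hz
  exact ⟨z, ν, ⟨hz, hν, hinner⟩, hxz.symm⟩

lemma inter_ball_subset_infDist_lt {X : Type*} [PseudoMetricSpace X] {s : Set X} {z : X} {d : ℝ}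
    (hz : z ∉ s) : s ∩ ball z d ⊆ {y ∈ s | infDist y sᶜ < d} :=
  fun _ hy => ⟨hy.1, (infDist_le_dist_of_mem hz).trans_lt hy.2⟩

variable [NeZero n] {lam Lam p q d0 K R : ℝ} {c : 𝔼 n} {b f u : 𝔼 n → ℝ}

lemma ne_univ_of_subset_ball (hΩR : Ω ⊆ ball c R) : Ω ≠ univ := by
  have : Nontrivial (𝔼 n) := inferInstance
  intro h
  exact NormedSpace.unbounded_univ ℝ (𝔼 n) (h ▸ isBounded_ball.subset hΩR)

/-- The constant of the boundary Lipschitz bound in convex domains contained in a ball of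
radius `R`. -/
noncomputable def boundaryLipschitzConst (n : ℕ) (lam Lam p q d0 K R : ℝ) : ℝ :=
  totalGrowthConst n lam (n * Lam / lam) q d0 K *
    (4 * (n * Lam / lam) * (globalBoundConst n lam p q K R / d0) + 1)

lemma boundaryLipschitzConst_pos (n : ℕ) (p q K : ℝ) (hlam : 0 ≤ lam) (hLam : 0 ≤ Lam)
    (hd0 : 0 ≤ d0) (hR : 0 ≤ R) : 0 < boundaryLipschitzConst n lam Lam p q d0 K R := by
  have hglobal := globalBoundConst_nonneg n lam p q K hR
  exact mul_pos (totalGrowthConst_pos _ _ _ _ _ _) (by positivity)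

lemma IsPucciSubsolution.le_boundaryLipschitzConst_mul (hu : IsPucciSubsolution lam Lam b f u Ω)
    (hlam : 0 < lam) (hLam : lam ≤ Lam) (hΩ : IsOpen Ω) (hconv : Convex ℝ Ω) (hΩR : Ω ⊆ ball c R)
    (huc : ContinuousOn u (closure Ω)) (hu0 : ∀ y ∈ frontier Ω, u y ≤ 0) (hq : n < q) (hp : n ≤ p)
    (hd0 : 0 < d0) (hK : 0 ≤ K) (hbK : LpNormE n q b Ω ≤ ENNReal.ofReal K) {P Q : ℝ} (hP : 0 ≤ P)
    (hQ : 0 ≤ Q) (hfP : LpNormE n p (fun y => max (f y) 0) Ω ≤ ENNReal.ofReal P)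
    (hfQ : LpNormE n q (fun y => max (f y) 0) {y ∈ Ω | infDist y Ωᶜ < d0} ≤ ENNReal.ofReal Q)
    {x : 𝔼 n} (hx : x ∈ Ω) :
    u x ≤ boundaryLipschitzConst n lam Lam p q d0 K R * (P + Q) * infDist x Ωᶜ := by
  have hR : 0 < R := pos_of_mem_ball (hΩR hx)
  have hq0 : 0 ≤ q := n.cast_nonneg.trans hq.le
  have hn : (1 : ℝ) ≤ n := Nat.one_le_cast.2 NeZero.one_le
  set B := n * Lam / lam
  have hB : 1 ≤ B :=
    (one_le_div hlam).2 (hLam.trans (le_mul_of_one_le_left (hlam.le.trans hLam) hn))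
  set M := globalBoundConst n lam p q K R
  have hM : 0 ≤ M := globalBoundConst_nonneg n lam p q K hR.le
  have hglobal : ∀ y ∈ Ω, u y ≤ M * P := fun y hy =>
    hu.le_globalBoundConst_mul hlam hLam hΩ hΩR huc hu0 hp hq.le hK hbK hP hfP hy
  obtain ⟨z, ν, hν, hxz⟩ := exists_isOuterNormal_dist_eq_infDist hΩ hconv
    (ne_univ_of_subset_ball hΩR) hx
  rw [← hxz]
  set H := totalGrowthConst n lam B q d0 K
  have hH : 1 ≤ H := one_le_totalGrowthConst (zero_le_one.trans hB) hK hd0.le hq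
  have hslope : M * P / d0 ≤ 4 * B * (M * P / d0) + Q :=
    le_add_of_le_of_nonneg (le_mul_of_one_le_left (by positivity) (by linarith)) hQ
  have hconst : H * (4 * B * (M * P / d0) + Q) ≤
      boundaryLipschitzConst n lam Lam p q d0 K R * (P + Q) := by
    have hcross : 0 ≤ 4 * B * (M / d0) * Q := by positivity
    refine (mul_le_mul_of_nonneg_left ?_ (zero_le_one.trans hH)).trans_eq (mul_assoc H _ _).symm
    rw [mul_div_right_comm]
    linarith
  calc u x ≤ H * (4 * B * (M * P / d0) + Q) * dist x z := ?_
    _ ≤ boundaryLipschitzConst n lam Lam p q d0 K R * (P + Q) * dist x z := by gcongr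
  rcases le_total (dist x z) d0 with hnear | hfar
  · refine hu.le_mul_dist hlam hLam hΩ huc hu0 hν hB (div_mul_cancel₀ _ hlam.ne').ge hq hK hd0 hQ
      ?_ ?_ (by positivity) hglobal hx hnear
    · exact (LpNormE_mono_set hq0 b inter_subset_left).trans hbK
    · exact (LpNormE_mono_set hq0 _ (inter_ball_subset_infDist_lt hν.notMem)).trans hfQ
  · calc u x ≤ M * P / d0 * d0 := by rw [div_mul_cancel₀ _ hd0.ne']; exact hglobal x hx
      _ ≤ M * P / d0 * dist x z := by gcongr
      _ ≤ H * (4 * B * (M * P / d0) + Q) * dist x z := by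
        gcongr
        exact hslope.trans (le_mul_of_one_le_left (by positivity) hH)

end ConvexDomain

open Metric in
theorem global_boundary_lipschitz_bound_unit_ball_general {n : ℕ} [NeZero n]
    {lam Lam p q d0 K R : ℝ} (hlam : 0 < lam) (hLam : lam ≤ Lam) (hq : n < q) (hp : n ≤ p)
    (hd0 : 0 < d0) (hK : 0 ≤ K) (hR : 0 ≤ R) :
    ∃ C : ℝ, 0 < C ∧ ∀ (Ω : Set (𝔼 n)) (c : 𝔼 n) (b f u : 𝔼 n → ℝ),
      IsOpen Ω → Convex ℝ Ω → Ω ⊆ ball c R → IsPucciSubsolution lam Lam b f u Ω →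
      LpNormE n q b Ω ≤ ENNReal.ofReal K → ContinuousOn u (closure Ω) →
      (∀ x ∈ frontier Ω, u x ≤ 0) → ∀ x ∈ Ω,
        ENNReal.ofReal (u x) ≤ ENNReal.ofReal C *
          (LpNormE n p (fun y => max (f y) 0) Ω +
            LpNormE n q (fun y => max (f y) 0) {y ∈ Ω | infDist y Ωᶜ < d0}) *
          ENNReal.ofReal (infDist x Ωᶜ) := by
  have hC : 0 < boundaryLipschitzConst n lam Lam p q d0 K R :=
    boundaryLipschitzConst_pos n p q K hlam.le (hlam.le.trans hLam) hd0.le hR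
  refine ⟨_, hC, fun Ω c b f u hΩ hconv hΩR hu hbK huc hu0 x hx => ?_⟩
  set P := LpNormE n p (fun y => max (f y) 0) Ω
  set Q := LpNormE n q (fun y => max (f y) 0) {y ∈ Ω | infDist y Ωᶜ < d0}
  have hdist : 0 < infDist x Ωᶜ :=
    (hΩ.isClosed_compl.notMem_iff_infDist_pos
      (Set.nonempty_compl.2 (ne_univ_of_subset_ball hΩR))).1 (Set.notMem_compl_iff.2 hx)
  by_cases htop : P + Q = ⊤
  · rw [htop, ENNReal.mul_top (ENNReal.ofReal_pos.2 hC).ne',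
      ENNReal.top_mul (ENNReal.ofReal_pos.2 hdist).ne']
    exact le_top
  obtain ⟨hP, hQ⟩ := ENNReal.add_ne_top.1 htop
  have hle := hu.le_boundaryLipschitzConst_mul hlam hLam hΩ hconv hΩR huc hu0 hq hp hd0 hK hbK
    P.toReal_nonneg Q.toReal_nonneg (ENNReal.ofReal_toReal hP).ge (ENNReal.ofReal_toReal hQ).ge hx
  rw [← ENNReal.toReal_add hP hQ] at hle
  refine (ENNReal.ofReal_le_ofReal hle).trans_eq ?_
  rw [ENNReal.ofReal_mul (by positivity), ENNReal.ofReal_mul hC.le, ENNReal.ofReal_toReal htop]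

/-- Global boundary Lipschitz bound in the unit ball. -/
theorem global_boundary_lipschitz_bound_unit_ball
    (n : ℕ) (hn : 2 ≤ n) (lam Lam : ℝ) (hlam : 0 < lam) (hLam : lam ≤ Lam)
    (p q d0 K : ℝ) (hq : (n : ℝ) < q) (hp : (n : ℝ) ≤ p) (hpq : p ≤ q)
    (hd0 : 0 < d0) (hd0' : d0 ≤ 1 / 4) (hK : 0 < K) :
    ∃ C : ℝ, 0 < C ∧
      ∀ b f u : EuclideanSpace ℝ (Fin n) → ℝ,
        ContinuousOn b (Metric.ball 0 1) →
        ContinuousOn f (Metric.ball 0 1) →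
        (∀ x ∈ Metric.ball (0 : EuclideanSpace ℝ (Fin n)) 1, 0 ≤ b x) →
        LpNormE n q b (Metric.ball 0 1) ≤ ENNReal.ofReal K →
        ContinuousOn u (Metric.closedBall 0 1) →
        ContDiffOn ℝ 2 u (Metric.ball 0 1) →
        (∀ x ∈ Metric.ball (0 : EuclideanSpace ℝ (Fin n)) 1,
          -f x ≤ pucciPlus n lam Lam (hess n u x) + b x * gradNorm n u x) →
        (∀ x ∈ Metric.sphere (0 : EuclideanSpace ℝ (Fin n)) 1, u x ≤ 0) →
        ∀ x ∈ Metric.ball (0 : EuclideanSpace ℝ (Fin n)) 1,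
          ENNReal.ofReal (u x)
            ≤ ENNReal.ofReal C *
              (LpNormE n p (fun y => max (f y) 0) (Metric.ball 0 1)
                + LpNormE n q (fun y => max (f y) 0)
                    {y ∈ Metric.ball (0 : EuclideanSpace ℝ (Fin n)) 1 | 1 - ‖y‖ < d0}) *
              ENNReal.ofReal (1 - ‖x‖) := by
  have : NeZero n := ⟨by omega⟩
  obtain ⟨C, hC, hbound⟩ := global_boundary_lipschitz_bound_unit_ball_general
    hlam hLam hq hp hd0 hK.le zero_le_one
  refine ⟨C, hC, fun b f u hb hf hb0 hbK huc hu2 hsub hu0 x hx => ?_⟩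
  have hdist : ∀ y ∈ Metric.ball (0 : EuclideanSpace ℝ (Fin n)) 1,
      Metric.infDist y (Metric.ball 0 1)ᶜ = 1 - ‖y‖ := fun y hy => by
    rw [infDist_compl_ball hy, dist_zero_right]
  have hlayer : {y ∈ Metric.ball (0 : EuclideanSpace ℝ (Fin n)) 1 | 1 - ‖y‖ < d0} =
      {y ∈ Metric.ball 0 1 | Metric.infDist y (Metric.ball 0 1)ᶜ < d0} :=
    Set.ext fun y => and_congr_right fun hy => by rw [hdist y hy]
  rw [hlayer, ← hdist x hx]
  exact hbound _ 0 b f u Metric.isOpen_ball (convex_ball 0 1) subset_rfl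
    ⟨hu2, hb.aestronglyMeasurable measurableSet_ball, hf.aestronglyMeasurable measurableSet_ball,
      hb0, hsub⟩ hbK (by rwa [closure_ball _ one_ne_zero])
    (by rwa [frontier_ball _ one_ne_zero]) x hx
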